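/- Let R be a ring, V and V' R-modules, N : V → V and N' : V' → V' nilpotent R-linear endomorphisms, and k an integer. Let M be a monodromy filtration of N on V centered at k and M' a monodromy filtration of N' on V' centered at k. If f : V → V' is an R-linear map with f ∘ N = N' ∘ f, then f (M i) ≤ M' i for every integer i. -/

import Mathlib

/-- `IsMonodromyFiltration N k M` says that `M` is a monodromy filtration of the nilpotent
endomorphism `N` centered at `k`: a finite increasing `ℤ`-indexed filtration by submodules
such that `N` maps `M i` into `M (i - 2)` and, for every natural number `i`, the map induced
by `N ^ i` from the graded piece `M (k + i) / M (k + i - 1)` to `M (k - i) / M (k - i - 1)`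
is an isomorphism. -/
structure IsMonodromyFiltration {R V : Type*} [Ring R] [AddCommGroup V] [Module R V]
    (N : V →ₗ[R] V) (k : ℤ) (M : ℤ → Submodule R V) : Prop where
  /-- The filtration is increasing. -/
  mono : Monotone M
  /-- The filtration is exhausted below. -/
  eventually_bot : ∃ a : ℤ, ∀ i ≤ a, M i = ⊥
  /-- The filtration is exhausted above. -/
  eventually_top : ∃ b : ℤ, ∀ i, b ≤ i → M i = ⊤
  /-- `N` maps `M i` into `M (i - 2)`. -/
  map_le : ∀ i : ℤ, (M i).map N ≤ M (i - 2)
  /-- For each `i : ℕ`, the map induced by `N ^ i` on graded pieces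
  `M (k + i) / M (k + i - 1) → M (k - i) / M (k - i - 1)` is an isomorphism. -/
  graded_iso : ∀ (i : ℕ) (h1 : ∀ x ∈ M (k + i), (N ^ i) x ∈ M (k - i))
      (h2 : (M (k + i - 1)).comap (M (k + i)).subtype ≤
        ((M (k - i - 1)).comap (M (k - i)).subtype).comap ((N ^ i).restrict h1)),
      Function.Bijective
        (Submodule.mapQ ((M (k + i - 1)).comap (M (k + i)).subtype)
          ((M (k - i - 1)).comap (M (k - i)).subtype) ((N ^ i).restrict h1) h2)

/-
A monodromy filtration centered at `k` is given by a formula in `N` alone: `M (k + r)` is the sum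
of the submodules `N ^ b (ker N ^ (a + 1))` with `a - 2 * b ≤ r`. A linear map intertwining `N` and
`N'` carries each of these summands into the corresponding one for `N'`. The inclusion `≤` rests on
the surjectivity of the maps induced by `N ^ m` between graded pieces, by induction from the bottom
of the filtration; the inclusion `≥` rests on their injectivity, by induction from the top.
-/

section Filtration

variable {R V : Type*} [Ring R] [AddCommGroup V] [Module R V]
  {N : V →ₗ[R] V} {k : ℤ} {M : ℤ → Submodule R V}

lemma map_pow_le_of_map_le (hmap : ∀ i, (M i).map N ≤ M (i - 2)) (n : ℕ) (i : ℤ) :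
    (M i).map (N ^ n) ≤ M (i - 2 * n) := by
  induction n with
  | zero => simp [Module.End.one_eq_id]
  | succ n ih =>
    calc (M i).map (N ^ (n + 1))
        = ((M i).map (N ^ n)).map N := by
          rw [pow_succ', Module.End.mul_eq_comp, Submodule.map_comp]
      _ ≤ (M (i - 2 * n)).map N := Submodule.map_mono ih
      _ ≤ M (i - 2 * n - 2) := hmap _
      _ = M (i - 2 * (n + 1 : ℕ)) := congrArg M (by omega)

lemma le_map_pow_of_graded_surjective (hmono : Monotone M) (hbot : ∃ a : ℤ, ∀ i ≤ a, M i = ⊥)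
    (hmap : ∀ i, (M i).map N ≤ M (i - 2))
    (hsurj : ∀ m : ℕ, M (k - m) ≤ (M (k + m)).map (N ^ m) ⊔ M (k - m - 1)) (m : ℕ) :
    M (k - m) ≤ (M (k + m)).map (N ^ m) := by
  obtain ⟨a, ha⟩ := hbot
  obtain ⟨n, hn⟩ : ∃ n : ℕ, k - m - n ≤ a := ⟨(k - m - a).toNat, by omega⟩
  induction n generalizing m with
  | zero => simp [ha (k - m) (by omega)]
  | succ n ih =>
    refine (hsurj m).trans (sup_le le_rfl ?_)
    calc M (k - m - 1)
        = M (k - (m + 1 : ℕ)) := congrArg M (by omega)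
      _ ≤ (M (k + (m + 1 : ℕ))).map (N ^ (m + 1)) := ih (m + 1) (by omega)
      _ = ((M (k + (m + 1 : ℕ))).map N).map (N ^ m) := by
          rw [pow_succ, Module.End.mul_eq_comp, Submodule.map_comp]
      _ ≤ (M (k + m)).map (N ^ m) :=
          Submodule.map_mono ((hmap _).trans (hmono (by omega)))

lemma le_ker_pow_succ_sup_map {m : ℕ} (hmap : ∀ i, (M i).map N ≤ M (i - 2))
    (hpow : M (k - (m + 2 : ℕ)) ≤ (M (k + (m + 2 : ℕ))).map (N ^ (m + 2))) :
    M (k + m) ≤ LinearMap.ker (N ^ (m + 1)) ⊔ (M (k + (m + 2 : ℕ))).map N := by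
  intro x hx
  have hNx : (N ^ (m + 1)) x ∈ M (k - (m + 2 : ℕ)) := by
    convert map_pow_le_of_map_le hmap (m + 1) _ (Submodule.mem_map_of_mem hx) using 2
    omega
  obtain ⟨z, hz, hzx⟩ := hpow hNx
  have hker : x - N z ∈ LinearMap.ker (N ^ (m + 1)) := by
    rw [LinearMap.mem_ker, map_sub, ← hzx, pow_succ N (m + 1), Module.End.mul_apply, sub_self]
  rw [← sub_add_cancel x (N z)]
  exact Submodule.add_mem_sup hker (Submodule.mem_map_of_mem hz)

lemma ker_pow_succ_le_of_graded_injective (htop : ∃ b : ℤ, ∀ i, b ≤ i → M i = ⊤)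
    (hinj : ∀ m : ℕ, M (k + m) ⊓ (M (k - m - 1)).comap (N ^ m) ≤ M (k + m - 1)) (m : ℕ) :
    LinearMap.ker (N ^ (m + 1)) ≤ M (k + m) := by
  obtain ⟨b, hb⟩ := htop
  obtain ⟨n, hn⟩ : ∃ n : ℕ, b ≤ k + m + n := ⟨(b - k - m).toNat, by omega⟩
  induction n generalizing m with
  | zero => simp [hb (k + m) (by omega)]
  | succ n ih =>
    have ker_le : LinearMap.ker (N ^ (m + 1)) ≤ M (k + (m + 1 : ℕ)) := by
      refine le_trans ?_ (ih (m + 1) (by omega))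
      rw [pow_succ' N (m + 1)]
      exact LinearMap.ker_le_ker_comp _ _
    calc LinearMap.ker (N ^ (m + 1))
        ≤ M (k + (m + 1 : ℕ)) ⊓ (M (k - (m + 1 : ℕ) - 1)).comap (N ^ (m + 1)) :=
          le_inf ker_le (Submodule.comap_mono bot_le)
      _ ≤ M (k + (m + 1 : ℕ) - 1) := hinj (m + 1)
      _ = M (k + m) := congrArg M (by omega)

/-- The convolution of the kernel and image filtrations of an endomorphism `N`, which is the only
candidate for a monodromy filtration of `N` centered at `0`. The image under `N ^ b` of the kernel
of `N ^ (a + 1)` is given weight `a - 2 * b`; the exponent `a + 1` leaves out the kernel of `N ^ 0`,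
which is zero. -/
def kernelImageFiltration (N : V →ₗ[R] V) (r : ℤ) : Submodule R V :=
  ⨆ (a : ℕ) (b : ℕ) (_ : (a : ℤ) - 2 * b ≤ r), (LinearMap.ker (N ^ (a + 1))).map (N ^ b)

namespace kernelImageFiltration

lemma le_iff {r : ℤ} {P : Submodule R V} :
    kernelImageFiltration N r ≤ P ↔
      ∀ a b : ℕ, (a : ℤ) - 2 * b ≤ r → (LinearMap.ker (N ^ (a + 1))).map (N ^ b) ≤ P := by
  simp only [kernelImageFiltration, iSup_le_iff]

lemma map_pow_ker_le {r : ℤ} {a b : ℕ} (h : (a : ℤ) - 2 * b ≤ r) :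
    (LinearMap.ker (N ^ (a + 1))).map (N ^ b) ≤ kernelImageFiltration N r :=
  le_iff.1 le_rfl a b h

lemma ker_pow_succ_le (N : V →ₗ[R] V) (m : ℕ) :
    LinearMap.ker (N ^ (m + 1)) ≤ kernelImageFiltration N m := by
  simpa [Module.End.one_eq_id] using map_pow_ker_le (N := N) (a := m) (b := 0) (r := m) (by simp)

lemma map_le (N : V →ₗ[R] V) (r : ℤ) :
    (kernelImageFiltration N r).map N ≤ kernelImageFiltration N (r - 2) := by
  rw [Submodule.map_le_iff_le_comap, le_iff]
  intro a b h
  rw [← Submodule.map_le_iff_le_comap, ← Submodule.map_comp, ← Module.End.mul_eq_comp, ← pow_succ']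
  exact map_pow_ker_le (by omega)

lemma le_comap_of_semiconj {R' V' : Type*} [Ring R'] [AddCommGroup V'] [Module R' V']
    {σ : R →+* R'} {N' : V' →ₗ[R'] V'} {f : V →ₛₗ[σ] V'} (hf : Function.Semiconj f N N') (r : ℤ) :
    kernelImageFiltration N r ≤ (kernelImageFiltration N' r).comap f := by
  have hpow (n : ℕ) (x : V) : f ((N ^ n) x) = (N' ^ n) (f x) := by
    simpa only [Module.End.coe_pow] using hf.iterate_right n x
  rw [le_iff]
  rintro a b h _ ⟨x, hx, rfl⟩
  rw [Submodule.mem_comap, hpow]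
  refine map_pow_ker_le h (Submodule.mem_map_of_mem ?_)
  rw [LinearMap.mem_ker, ← hpow, LinearMap.mem_ker.1 hx, map_zero]

lemma le_of_graded_injective (hmono : Monotone M) (htop : ∃ b : ℤ, ∀ i, b ≤ i → M i = ⊤)
    (hmap : ∀ i, (M i).map N ≤ M (i - 2))
    (hinj : ∀ m : ℕ, M (k + m) ⊓ (M (k - m - 1)).comap (N ^ m) ≤ M (k + m - 1)) (r : ℤ) :
    kernelImageFiltration N r ≤ M (k + r) := by
  rw [le_iff]
  intro a b h
  calc (LinearMap.ker (N ^ (a + 1))).map (N ^ b)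
      ≤ (M (k + a)).map (N ^ b) :=
        Submodule.map_mono (ker_pow_succ_le_of_graded_injective htop hinj a)
    _ ≤ M (k + a - 2 * b) := map_pow_le_of_map_le hmap b _
    _ ≤ M (k + r) := hmono (by omega)

end kernelImageFiltration

lemma le_kernelImageFiltration_natCast_of_le_map_pow (hbot : ∃ a : ℤ, ∀ i ≤ a, M i = ⊥)
    (hmap : ∀ i, (M i).map N ≤ M (i - 2))
    (hpow : ∀ m : ℕ, M (k - m) ≤ (M (k + m)).map (N ^ m)) (m : ℕ) :
    M (k + m) ≤ kernelImageFiltration N m := by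
  obtain ⟨a, ha⟩ := hbot
  obtain ⟨n, hn⟩ : ∃ n : ℕ, k - m - 2 - n ≤ a := ⟨(k - m - 2 - a).toNat, by omega⟩
  induction n generalizing m with
  | zero =>
    refine le_trans ?_ (kernelImageFiltration.ker_pow_succ_le N m)
    rw [← Submodule.comap_bot, ← Submodule.map_le_iff_le_comap, ← ha (k - m - 2) (by omega)]
    convert map_pow_le_of_map_le hmap (m + 1) (k + m) using 2
    omega
  | succ n ih =>
    have map_le : (M (k + (m + 2 : ℕ))).map N ≤ kernelImageFiltration N m := by
      convert (Submodule.map_mono (ih (m + 2) (by omega))).trans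
        (kernelImageFiltration.map_le N _) using 2
      omega
    exact (le_ker_pow_succ_sup_map hmap (hpow (m + 2))).trans
      (sup_le (kernelImageFiltration.ker_pow_succ_le N m) map_le)

lemma le_kernelImageFiltration_of_graded_surjective (hmono : Monotone M)
    (hbot : ∃ a : ℤ, ∀ i ≤ a, M i = ⊥) (hmap : ∀ i, (M i).map N ≤ M (i - 2))
    (hsurj : ∀ m : ℕ, M (k - m) ≤ (M (k + m)).map (N ^ m) ⊔ M (k - m - 1)) (r : ℤ) :
    M (k + r) ≤ kernelImageFiltration N r := by
  have hpow := le_map_pow_of_graded_surjective hmono hbot hmap hsurj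
  obtain ⟨m, rfl | rfl⟩ := r.eq_nat_or_neg
  · exact le_kernelImageFiltration_natCast_of_le_map_pow hbot hmap hpow m
  · calc M (k + -m)
        ≤ (M (k + m)).map (N ^ m) := hpow m
      _ ≤ (kernelImageFiltration N m).map (N ^ m) :=
          Submodule.map_mono (le_kernelImageFiltration_natCast_of_le_map_pow hbot hmap hpow m)
      _ ≤ kernelImageFiltration N (m - 2 * m) :=
          map_pow_le_of_map_le (kernelImageFiltration.map_le N) m m
      _ = kernelImageFiltration N (-m) := congrArg _ (by omega)

end Filtration

namespace IsMonodromyFiltration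

variable {R V : Type*} [Ring R] [AddCommGroup V] [Module R V]
  {N : V →ₗ[R] V} {k : ℤ} {M : ℤ → Submodule R V}

lemma map_pow_le (hM : IsMonodromyFiltration N k M) (m : ℕ) :
    (M (k + m)).map (N ^ m) ≤ M (k - m) := by
  convert map_pow_le_of_map_le hM.map_le m (k + m) using 2
  omega

lemma map_pow_sub_one_le (hM : IsMonodromyFiltration N k M) (m : ℕ) :
    (M (k + m - 1)).map (N ^ m) ≤ M (k - m - 1) := by
  convert map_pow_le_of_map_le hM.map_le m (k + m - 1) using 2
  omega

lemma le_map_pow_sup (hM : IsMonodromyFiltration N k M) (m : ℕ) :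
    M (k - m) ≤ (M (k + m)).map (N ^ m) ⊔ M (k - m - 1) := by
  intro y hy
  obtain ⟨q, hq⟩ := (hM.graded_iso m (Submodule.map_le_iff_le_comap.1 (hM.map_pow_le m))
    fun x hx => hM.map_pow_sub_one_le m (Submodule.mem_map_of_mem hx)).surjective
      (Submodule.Quotient.mk ⟨y, hy⟩)
  obtain ⟨x, rfl⟩ := Submodule.Quotient.mk_surjective _ q
  have hxy : y - (N ^ m) x ∈ M (k - m - 1) := by
    rw [Submodule.mapQ_apply] at hq
    simpa using (Submodule.Quotient.eq _).1 hq.symm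
  rw [← add_sub_cancel ((N ^ m) (x : V)) y]
  exact Submodule.add_mem_sup (Submodule.mem_map_of_mem x.2) hxy

lemma inf_comap_pow_le (hM : IsMonodromyFiltration N k M) (m : ℕ) :
    M (k + m) ⊓ (M (k - m - 1)).comap (N ^ m) ≤ M (k + m - 1) := by
  rintro x ⟨hx, hNx⟩
  have hinj := (hM.graded_iso m (Submodule.map_le_iff_le_comap.1 (hM.map_pow_le m))
    fun x hx => hM.map_pow_sub_one_le m (Submodule.mem_map_of_mem hx)).injective
  have hmk : (Submodule.Quotient.mk ⟨x, hx⟩ :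
      M (k + m) ⧸ (M (k + m - 1)).comap (M (k + m)).subtype) = 0 :=
    (injective_iff_map_eq_zero _).1 hinj _ ((Submodule.Quotient.mk_eq_zero _).2 hNx)
  rwa [Submodule.Quotient.mk_eq_zero, Submodule.mem_comap] at hmk

end IsMonodromyFiltration

/- `hsurj` and `hinj` express in the lattice of submodules that the maps
`Gr (k + m) → Gr (k - m)` induced by `N ^ m` are surjective, and those induced by `N' ^ m`
injective. -/
theorem monodromy_filtration_functorial_general {R R' V V' : Type*} [Ring R] [Ring R']
    [AddCommGroup V] [Module R V] [AddCommGroup V'] [Module R' V'] {σ : R →+* R'}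
    {N : V →ₗ[R] V} {N' : V' →ₗ[R'] V'} {k k' : ℤ}
    {M : ℤ → Submodule R V} {M' : ℤ → Submodule R' V'}
    (hmono : Monotone M) (hbot : ∃ a : ℤ, ∀ i ≤ a, M i = ⊥)
    (hmap : ∀ i, (M i).map N ≤ M (i - 2))
    (hsurj : ∀ m : ℕ, M (k - m) ≤ (M (k + m)).map (N ^ m) ⊔ M (k - m - 1))
    (hmono' : Monotone M') (htop : ∃ b : ℤ, ∀ i, b ≤ i → M' i = ⊤)
    (hmap' : ∀ i, (M' i).map N' ≤ M' (i - 2))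
    (hinj : ∀ m : ℕ, M' (k' + m) ⊓ (M' (k' - m - 1)).comap (N' ^ m) ≤ M' (k' + m - 1))
    {f : V →ₛₗ[σ] V'} (hf : Function.Semiconj f N N') (r : ℤ) :
    M (k + r) ≤ (M' (k' + r)).comap f :=
  calc M (k + r)
      ≤ kernelImageFiltration N r :=
        le_kernelImageFiltration_of_graded_surjective hmono hbot hmap hsurj r
    _ ≤ (kernelImageFiltration N' r).comap f := kernelImageFiltration.le_comap_of_semiconj hf r
    _ ≤ (M' (k' + r)).comap f :=
        Submodule.comap_mono (kernelImageFiltration.le_of_graded_injective hmono' htop hmap' hinj r)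

/-- Functoriality of the monodromy filtration: a linear map intertwining two nilpotent
endomorphisms is compatible with their monodromy filtrations centered at the same `k`. -/
theorem monodromy_filtration_functorial {R V V' : Type*} [Ring R]
    [AddCommGroup V] [Module R V] [AddCommGroup V'] [Module R V']
    (N : V →ₗ[R] V) (N' : V' →ₗ[R] V') (hN : IsNilpotent N) (hN' : IsNilpotent N') (k : ℤ)
    (M : ℤ → Submodule R V) (M' : ℤ → Submodule R V')
    (hM : IsMonodromyFiltration N k M) (hM' : IsMonodromyFiltration N' k M')
    (f : V →ₗ[R] V') (hf : f.comp N = N'.comp f) :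
    ∀ i : ℤ, (M i).map f ≤ M' i := by
  intro i
  rw [Submodule.map_le_iff_le_comap, ← add_sub_cancel k i]
  exact monodromy_filtration_functorial_general hM.mono hM.eventually_bot hM.map_le
    hM.le_map_pow_sup hM'.mono hM'.eventually_top hM'.map_le hM'.inf_comap_pow_le
    (LinearMap.congr_fun hf) (i - k)
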